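/- arXiv:1903.03331 — 2 statements merged into one kernel-verified Lean document; each statement's English description precedes it below -/
import Mathlib

section
/- (Algebraic reduction property) For every natural number n and every GLP_ω formula φ, the formula ⟨n+1⟩φ is n-conservative over the set { Q_n^k(φ) : k < ω }; that is, for every formula ψ, ⟨n+1⟩φ ⊢_GLP ⟨n⟩ψ if and only if { Q_n^k(φ) : k < ω } ⊢_GLP ⟨n⟩ψ. -/
/-- Formulas of polymodal provability logic GLP: propositional variables, ⊤,
Boolean connectives, and a modality `[ξ]` for each ordinal `ξ`. -/
inductive GLPFormula : Type 1 where
  | var : ℕ → GLPFormula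
  | top : GLPFormula
  | neg : GLPFormula → GLPFormula
  | and : GLPFormula → GLPFormula → GLPFormula
  | imp : GLPFormula → GLPFormula → GLPFormula
  | box : Ordinal → GLPFormula → GLPFormula

namespace GLPFormula

/-- `⟨ξ⟩φ` abbreviates `¬[ξ]¬φ`. -/
def dia (ξ : Ordinal) (φ : GLPFormula) : GLPFormula := neg (box ξ (neg φ))

/-- Biconditional, defined from the other connectives. -/
def biimp (φ ψ : GLPFormula) : GLPFormula := and (imp φ ψ) (imp ψ φ)

/-- The set of ordinals occurring as modality indices in a formula. -/
def mods : GLPFormula → Set Ordinal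
  | var _ => ∅
  | top => ∅
  | neg φ => mods φ
  | and φ ψ => mods φ ∪ mods ψ
  | imp φ ψ => mods φ ∪ mods ψ
  | box ξ φ => insert ξ (mods φ)

end GLPFormula

/-- A propositional tautology: true under every Boolean valuation that respects
the Boolean connectives (variables and boxed formulas are treated as atoms). -/
def IsTautology (φ : GLPFormula) : Prop :=
  ∀ v : GLPFormula → Bool,
    v GLPFormula.top = true →
    (∀ ψ, v ψ.neg = !v ψ) →
    (∀ ψ χ, v (ψ.and χ) = (v ψ && v χ)) →
    (∀ ψ χ, v (ψ.imp χ) = (!v ψ || v χ)) →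
    v φ = true

/-- Derivability in GLP, with modality indices restricted to the set `S`
(`S = Set.univ` gives full GLP; `S = Set.Iio ω` gives GLP_ω). -/
inductive GLPProof (S : Set Ordinal) : GLPFormula → Prop where
  | taut {φ} : φ.mods ⊆ S → IsTautology φ → GLPProof S φ
  | distr {ξ φ ψ} : ξ ∈ S → φ.mods ⊆ S → ψ.mods ⊆ S →
      GLPProof S ((GLPFormula.box ξ (φ.imp ψ)).imp
        ((GLPFormula.box ξ φ).imp (GLPFormula.box ξ ψ)))
  | trans {ξ φ} : ξ ∈ S → φ.mods ⊆ S →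
      GLPProof S ((GLPFormula.box ξ φ).imp (GLPFormula.box ξ (GLPFormula.box ξ φ)))
  | lob {ξ φ} : ξ ∈ S → φ.mods ⊆ S →
      GLPProof S ((GLPFormula.box ξ ((GLPFormula.box ξ φ).imp φ)).imp (GLPFormula.box ξ φ))
  | negIntro {ξ ζ φ} : ξ < ζ → ξ ∈ S → ζ ∈ S → φ.mods ⊆ S →
      GLPProof S ((GLPFormula.dia ζ φ).imp (GLPFormula.dia ξ φ))
  | mono {ξ ζ φ} : ξ < ζ → ξ ∈ S → ζ ∈ S → φ.mods ⊆ S →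
      GLPProof S ((GLPFormula.dia ξ φ).imp (GLPFormula.box ζ (GLPFormula.dia ξ φ)))
  | mp {φ ψ} : GLPProof S (φ.imp ψ) → GLPProof S φ → GLPProof S ψ
  | nec {ξ φ} : ξ ∈ S → GLPProof S φ → GLPProof S (GLPFormula.box ξ φ)

/-- Derivability in full GLP (modalities indexed by all ordinals). -/
def GLPProves (φ : GLPFormula) : Prop := GLPProof Set.univ φ

/-- Derivability in GLP_ω (modalities indexed by natural numbers). -/
def GLPomegaProves (φ : GLPFormula) : Prop := GLPProof (Set.Iio Ordinal.omega0) φ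

/-- A GLP_ω formula: all modality indices are below ω. -/
def IsOmegaFormula (φ : GLPFormula) : Prop := φ.mods ⊆ Set.Iio Ordinal.omega0

/-- Conjunction of a finite list of formulas. -/
def listConj : List GLPFormula → GLPFormula
  | [] => GLPFormula.top
  | φ :: l => φ.and (listConj l)

/-- `SetProves S τ χ`: the set `τ` proves `χ`, i.e. `ψ₁ ∧ … ∧ ψₘ → χ` is
derivable for some finite list of members of `τ`. -/
def SetProves (S : Set Ordinal) (τ : Set GLPFormula) (χ : GLPFormula) : Prop :=
  ∃ l : List GLPFormula, (∀ ψ ∈ l, ψ ∈ τ) ∧ GLPProof S ((listConj l).imp χ)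

/-- The iterated consistency formulas: `Q n 0 φ = ⊤`, `Q n (k+1) φ = ⟨n⟩(φ ∧ Q n k φ)`. -/
def Q (n : Ordinal) : ℕ → GLPFormula → GLPFormula
  | 0, _ => GLPFormula.top
  | k + 1, φ => GLPFormula.dia n ((GLPFormula.and φ (Q n k φ)))

/-- `diaPow n k φ` is `⟨n⟩^k φ`, `k` iterated applications of `⟨n⟩`. -/
def diaPow (n : Ordinal) : ℕ → GLPFormula → GLPFormula
  | 0, φ => φ
  | k + 1, φ => GLPFormula.dia n (diaPow n k φ)

/-- The formula corresponding to a worm, given as its list of modality indices: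
`[] ↦ ⊤` and `γ :: A ↦ ⟨γ⟩A`. -/
def wormFormula : List Ordinal → GLPFormula
  | [] => GLPFormula.top
  | γ :: A => GLPFormula.dia γ (wormFormula A)

/-- The generalized `Q`-formula: `Q(⊤,φ) = ⊤`, `Q(⟨γ⟩A, φ) = ⟨γ⟩(φ ∧ Q(A,φ))`. -/
def QWorm : List Ordinal → GLPFormula → GLPFormula
  | [], _ => GLPFormula.top
  | γ :: A, φ => GLPFormula.dia γ (GLPFormula.and φ (QWorm A φ))

/-!
Fix a point `v` of a GLP model at which `χ → ⟨n⟩χ` holds for every `χ`, and add a root which sees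
`v` and the `n+1`-successors of `v` through `[n+1]`, agrees with `v` on the modalities up to `n`,
and sees nothing through higher ones. The reflection hypothesis at `v` is what makes negative
introspection hold at the root, so the root satisfies every theorem of GLP. Spelled out
syntactically, this is a translation of formulas under which every theorem of GLP becomes derivable
from the schema `χ → ⟨n⟩χ`. It turns `⟨n+1⟩φ → ⟨n⟩ψ` into `φ ∨ ⟨n+1⟩φ → ⟨n⟩ψ`, so that
`φ → ⟨n⟩ψ` follows from the schema.

Only finitely many instances of the schema are used. Along a chain of points, each seeing all later
ones through `[n]`, a given instance `χ → ⟨n⟩χ` fails at most once, so that one can pass from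
`Q_n^{k+1}(φ)` to `Q_n^k(φ ∧ (χ → ⟨n⟩χ))`. After absorbing all `m` instances, `Q_n^{m+1}(φ)` yields
a point where `φ` and all the instances hold, hence `⟨n⟩⟨n⟩ψ` and so `⟨n⟩ψ`.

Conversely, `⟨n+1⟩φ` implies `Q_n^k(φ)` by induction on `k`, because `Q_n^k(φ)` implies
`[n+1]Q_n^k(φ)`.
-/

/-- The Prop-valued assignments of truth values to formulas which respect the Boolean connectives;
as in `IsTautology`, variables and boxed formulas are atoms. -/
structure IsBooleanValuation (P : GLPFormula → Prop) : Prop where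
  top : P .top
  neg (φ : GLPFormula) : P φ.neg ↔ ¬ P φ
  and (φ ψ : GLPFormula) : P (φ.and ψ) ↔ P φ ∧ P ψ
  imp (φ ψ : GLPFormula) : P (φ.imp ψ) ↔ (P φ → P ψ)

namespace IsBooleanValuation

variable {P : GLPFormula → Prop}

theorem dia (hP : IsBooleanValuation P) (ξ : Ordinal) (φ : GLPFormula) :
    P (.dia ξ φ) ↔ ¬ P (.box ξ φ.neg) :=
  hP.neg _

theorem listConj (hP : IsBooleanValuation P) (l : List GLPFormula) :
    P (listConj l) ↔ ∀ φ ∈ l, P φ := by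
  induction l with
  | nil => simpa [_root_.listConj] using hP.top
  | cons φ l ih => simp only [_root_.listConj, hP.and, ih, List.forall_mem_cons]

end IsBooleanValuation

theorem isTautology_iff_forall_isBooleanValuation {φ : GLPFormula} :
    IsTautology φ ↔ ∀ P, IsBooleanValuation P → P φ := by
  classical
  constructor
  · intro hφ P hP
    have hdecide := hφ (fun ψ => decide (P ψ)) (by simpa using hP.top) (by simp [hP.neg])
      (by simp [hP.and]) (by simp [hP.imp, imp_iff_not_or])
    simpa using hdecide
  · intro h v htop hneg hand himp
    exact h (fun ψ => v ψ = true)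
      ⟨htop, by simp [hneg], by simp [hand], by simp [himp, imp_iff_not_or]⟩

namespace GLPProves

variable {φ ψ χ : GLPFormula}

theorem of_forall_valuation (h : ∀ P, IsBooleanValuation P → P φ) : GLPProves φ :=
  .taut (Set.subset_univ _) (isTautology_iff_forall_isBooleanValuation.2 h)

theorem mp (h : GLPProves (φ.imp ψ)) (hφ : GLPProves φ) : GLPProves ψ :=
  GLPProof.mp h hφ

theorem nec (ξ : Ordinal) (h : GLPProves φ) : GLPProves (.box ξ φ) :=
  GLPProof.nec (Set.mem_univ ξ) h

theorem box_distr (ξ : Ordinal) (φ ψ : GLPFormula) :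
    GLPProves ((GLPFormula.box ξ (φ.imp ψ)).imp ((GLPFormula.box ξ φ).imp (.box ξ ψ))) :=
  .distr (Set.mem_univ ξ) (Set.subset_univ _) (Set.subset_univ _)

theorem box_trans (ξ : Ordinal) (φ : GLPFormula) :
    GLPProves ((GLPFormula.box ξ φ).imp (.box ξ (.box ξ φ))) :=
  .trans (Set.mem_univ ξ) (Set.subset_univ _)

theorem lob (ξ : Ordinal) (φ : GLPFormula) :
    GLPProves ((GLPFormula.box ξ ((GLPFormula.box ξ φ).imp φ)).imp (.box ξ φ)) :=
  GLPProof.lob (Set.mem_univ ξ) (Set.subset_univ _)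

theorem dia_of_lt {ξ ζ : Ordinal} (h : ξ < ζ) (φ : GLPFormula) :
    GLPProves ((GLPFormula.dia ζ φ).imp (.dia ξ φ)) :=
  .negIntro h (Set.mem_univ ξ) (Set.mem_univ ζ) (Set.subset_univ _)

theorem box_dia_of_lt {ξ ζ : Ordinal} (h : ξ < ζ) (φ : GLPFormula) :
    GLPProves ((GLPFormula.dia ξ φ).imp (.box ζ (.dia ξ φ))) :=
  .mono h (Set.mem_univ ξ) (Set.mem_univ ζ) (Set.subset_univ _)

theorem imp_trans (h₁ : GLPProves (φ.imp ψ)) (h₂ : GLPProves (ψ.imp χ)) :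
    GLPProves (φ.imp χ) := by
  refine mp (mp (of_forall_valuation fun P hP => ?_) h₁) h₂
  simp only [hP.imp]
  tauto

theorem box_mono (ξ : Ordinal) (h : GLPProves (φ.imp ψ)) :
    GLPProves ((GLPFormula.box ξ φ).imp (.box ξ ψ)) :=
  (box_distr ξ φ ψ).mp (h.nec ξ)

theorem box_imp_dia_imp_dia_of_imp {ξ : Ordinal}
    (h : GLPProves (φ.imp ((GLPFormula.box ξ φ).imp (ψ.imp χ)))) :
    GLPProves ((GLPFormula.box ξ φ).imp ((GLPFormula.dia ξ ψ).imp (.dia ξ χ))) := by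
  have contrapositive :
      GLPProves (φ.imp ((GLPFormula.box ξ φ).imp (χ.neg.imp ψ.neg))) := by
    refine mp (of_forall_valuation fun P hP => ?_) h
    simp only [hP.imp, hP.neg]
    tauto
  refine mp (mp (mp (mp (of_forall_valuation fun P hP => ?_) (box_trans ξ φ))
    (box_mono ξ contrapositive)) (box_distr ξ (.box ξ φ) (χ.neg.imp ψ.neg)))
    (box_distr ξ χ.neg ψ.neg)
  simp only [hP.imp, hP.dia]
  tauto

-- The hypothesis is `φ → ψ ∨ ⟨ξ⟩ψ`; the language has no disjunction.
theorem dia_imp_dia_of_imp_or_dia {ξ : Ordinal} (h : GLPProves (φ.imp (ψ.neg.imp (.dia ξ ψ)))) :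
    GLPProves ((GLPFormula.dia ξ φ).imp (.dia ξ ψ)) := by
  have refute : GLPProves (ψ.neg.imp ((GLPFormula.box ξ ψ.neg).imp (φ.imp ψ))) := by
    refine mp (of_forall_valuation fun P hP => ?_) h
    simp only [hP.imp, hP.neg, hP.dia]
    tauto
  refine mp (of_forall_valuation fun P hP => ?_) (box_imp_dia_imp_dia_of_imp refute)
  simp only [hP.imp, hP.dia]
  tauto

theorem dia_mono (ξ : Ordinal) (h : GLPProves (φ.imp ψ)) :
    GLPProves ((GLPFormula.dia ξ φ).imp (.dia ξ ψ)) := by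
  refine dia_imp_dia_of_imp_or_dia (mp (of_forall_valuation fun P hP => ?_) h)
  simp only [hP.imp, hP.neg]
  tauto

theorem box_imp_dia_imp_dia_and (ξ : Ordinal) (φ ψ : GLPFormula) :
    GLPProves ((GLPFormula.box ξ φ).imp ((GLPFormula.dia ξ ψ).imp (.dia ξ (ψ.and φ)))) := by
  refine box_imp_dia_imp_dia_of_imp (of_forall_valuation fun P hP => ?_)
  simp only [hP.imp, hP.and]
  tauto

theorem dia_dia (ξ : Ordinal) (φ : GLPFormula) :
    GLPProves ((GLPFormula.dia ξ (.dia ξ φ)).imp (.dia ξ φ)) := by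
  refine dia_imp_dia_of_imp_or_dia (of_forall_valuation fun P hP => ?_)
  simp only [hP.imp]
  tauto

end GLPProves

namespace SetProves

variable {τ : Set GLPFormula} {φ ψ χ : GLPFormula}

theorem of_proves (h : GLPProves φ) : SetProves Set.univ τ φ := by
  refine ⟨[], by simp, GLPProves.mp (.of_forall_valuation fun P hP => ?_) h⟩
  simp only [hP.imp]
  tauto

theorem of_mem (h : φ ∈ τ) : SetProves Set.univ τ φ := by
  refine ⟨[φ], by simpa using h, GLPProves.of_forall_valuation fun P hP => ?_⟩
  simp [hP.imp, hP.listConj]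

theorem mp (h : SetProves Set.univ τ (φ.imp ψ)) (hφ : SetProves Set.univ τ φ) :
    SetProves Set.univ τ ψ := by
  obtain ⟨l, hl, himp⟩ := h
  obtain ⟨m, hm, harg⟩ := hφ
  refine ⟨l ++ m, fun θ hθ => (List.mem_append.1 hθ).elim (hl θ) (hm θ),
    GLPProves.mp (.mp (.of_forall_valuation fun P hP => ?_) himp) harg⟩
  simp only [hP.imp, hP.listConj, List.forall_mem_append]
  tauto

theorem imp_of_forall_imp (h : SetProves Set.univ τ χ) (hτ : ∀ ψ ∈ τ, GLPProves (φ.imp ψ)) :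
    GLPProves (φ.imp χ) := by
  obtain ⟨l, hl, hχ⟩ := h
  refine GLPProves.imp_trans ?_ hχ
  clear hχ
  induction l with
  | nil =>
    refine .of_forall_valuation fun P hP => ?_
    simp [hP.imp, hP.listConj]
  | cons ψ l ih =>
    rw [List.forall_mem_cons] at hl
    refine .mp (.mp (.of_forall_valuation fun P hP => ?_) (hτ ψ hl.1)) (ih hl.2)
    simp only [hP.imp, hP.listConj, List.forall_mem_cons]
    tauto

end SetProves

/-- The instances of the schema `χ → ⟨n⟩χ`; a point satisfying them all behaves as if it were its
own `n`-successor. -/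
def reflectionSchema (n : Ordinal) : Set GLPFormula :=
  Set.range fun χ : GLPFormula => χ.imp (.dia n χ)

/-- What `φ` says about a point `v` when it is evaluated at a new root whose `n+1`-successors are
`v` and the `n+1`-successors of `v`, whose `ξ`-successors for `ξ ≤ n` are those of `v`, and which
has no other successors. The root agrees with `v` on the variables, an arbitrary choice. -/
noncomputable def GLPFormula.atRoot (n : Ordinal) : GLPFormula → GLPFormula
  | .var i => .var i
  | .top => .top
  | .neg φ => .neg (atRoot n φ)
  | .and φ ψ => .and (atRoot n φ) (atRoot n ψ)
  | .imp φ ψ => .imp (atRoot n φ) (atRoot n ψ)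
  | .box ξ φ => if ξ ≤ n then .box ξ φ else if ξ = n + 1 then .and φ (.box ξ φ) else .top

theorem IsBooleanValuation.comp_atRoot {P : GLPFormula → Prop} (hP : IsBooleanValuation P)
    (n : Ordinal) : IsBooleanValuation fun φ => P (φ.atRoot n) where
  top := hP.top
  neg φ := hP.neg (φ.atRoot n)
  and φ ψ := hP.and (φ.atRoot n) (ψ.atRoot n)
  imp φ ψ := hP.imp (φ.atRoot n) (ψ.atRoot n)

namespace GLPProves

open GLPFormula

variable {φ : GLPFormula}

theorem atRoot_of_isTautology (n : Ordinal) (h : IsTautology φ) : GLPProves (φ.atRoot n) :=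
  of_forall_valuation fun _ hP =>
    isTautology_iff_forall_isBooleanValuation.1 h _ (hP.comp_atRoot n)

theorem atRoot_box_distr (n ξ : Ordinal) (φ ψ : GLPFormula) :
    GLPProves (((box ξ (φ.imp ψ)).imp ((box ξ φ).imp (box ξ ψ))).atRoot n) := by
  refine mp (of_forall_valuation fun P hP => ?_) (box_distr ξ φ ψ)
  simp only [atRoot]
  split_ifs <;> simp only [hP.imp, hP.and, hP.top] <;> tauto

theorem atRoot_box_trans (n ξ : Ordinal) (φ : GLPFormula) :
    GLPProves (((box ξ φ).imp (box ξ (box ξ φ))).atRoot n) := by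
  refine mp (of_forall_valuation fun P hP => ?_) (box_trans ξ φ)
  simp only [atRoot]
  split_ifs <;> simp only [hP.imp, hP.and, hP.top] <;> tauto

theorem atRoot_lob (n ξ : Ordinal) (φ : GLPFormula) :
    GLPProves (((box ξ ((box ξ φ).imp φ)).imp (box ξ φ)).atRoot n) := by
  refine mp (of_forall_valuation fun P hP => ?_) (lob ξ φ)
  simp only [atRoot]
  split_ifs <;> simp only [hP.imp, hP.and, hP.top] <;> tauto

theorem atRoot_box_dia_of_lt (n : Ordinal) {ξ ζ : Ordinal} (h : ξ < ζ) (φ : GLPFormula) :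
    GLPProves (((dia ξ φ).imp (box ζ (dia ξ φ))).atRoot n) := by
  refine mp (of_forall_valuation fun P hP => ?_) (box_dia_of_lt h φ)
  rcases le_or_gt ξ n with hξ | hξ
  · simp only [dia, atRoot, if_pos hξ]
    split_ifs <;> simp only [hP.imp, hP.and, hP.top] <;> tauto
  · have hζ : n + 1 < ζ := (Order.add_one_le_iff.2 hξ).trans_lt h
    simp only [atRoot, if_neg ((lt_add_one n).trans hζ).not_ge, if_neg hζ.ne', hP.imp, hP.top,
      implies_true]

theorem atRoot_nec (n ξ : Ordinal) (h : GLPProves φ) : GLPProves ((box ξ φ).atRoot n) := by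
  refine mp (mp (of_forall_valuation fun P hP => ?_) h) (h.nec ξ)
  simp only [atRoot]
  split_ifs <;> simp only [hP.imp, hP.and, hP.top] <;> tauto

end GLPProves

namespace SetProves

open GLPFormula

theorem reflectionSchema_imp_dia {n ξ : Ordinal} (h : ξ ≤ n) (φ : GLPFormula) :
    SetProves Set.univ (reflectionSchema n) (φ.imp (dia ξ φ)) := by
  have reflection : SetProves Set.univ (reflectionSchema n) (φ.imp (dia n φ)) := of_mem ⟨φ, rfl⟩
  rcases h.eq_or_lt with rfl | hlt
  · exact reflection
  · refine mp (of_proves (.mp (.of_forall_valuation fun P hP => ?_)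
      (GLPProves.dia_of_lt hlt φ))) reflection
    simp only [hP.imp]
    tauto

theorem atRoot_dia_of_lt (n : Ordinal) {ξ ζ : Ordinal} (h : ξ < ζ) (φ : GLPFormula) :
    SetProves Set.univ (reflectionSchema n) (((dia ζ φ).imp (dia ξ φ)).atRoot n) := by
  rcases le_or_gt ξ n with hξ | hξ
  · refine mp (of_proves (.mp (.of_forall_valuation fun P hP => ?_)
      (GLPProves.dia_of_lt h φ))) (reflectionSchema_imp_dia hξ φ)
    simp only [dia, atRoot, if_pos hξ]
    split_ifs <;> simp only [hP.imp, hP.and, hP.neg, hP.top] <;> tauto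
  · have hζ : n + 1 < ζ := (Order.add_one_le_iff.2 hξ).trans_lt h
    refine of_proves (.of_forall_valuation fun P hP => ?_)
    simp only [dia, atRoot, if_neg ((lt_add_one n).trans hζ).not_ge, if_neg hζ.ne', hP.imp,
      hP.neg, hP.top, not_true_eq_false, false_implies]

theorem atRoot_of_proves (n : Ordinal) {φ : GLPFormula} (h : GLPProves φ) :
    SetProves Set.univ (reflectionSchema n) (φ.atRoot n) := by
  induction h with
  | taut _ h => exact of_proves (GLPProves.atRoot_of_isTautology n h)
  | distr => exact of_proves (GLPProves.atRoot_box_distr n _ _ _)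
  | trans => exact of_proves (GLPProves.atRoot_box_trans n _ _)
  | lob => exact of_proves (GLPProves.atRoot_lob n _ _)
  | negIntro h => exact atRoot_dia_of_lt n h _
  | mono h => exact of_proves (GLPProves.atRoot_box_dia_of_lt n h _)
  | mp _ _ himp harg => exact mp himp harg
  | nec _ h => exact of_proves (GLPProves.atRoot_nec n _ h)

theorem imp_dia_of_dia_add_one_imp_dia {n : Ordinal} {φ ψ : GLPFormula}
    (h : GLPProves ((dia (n + 1) φ).imp (dia n ψ))) :
    SetProves Set.univ (reflectionSchema n) (φ.imp (dia n ψ)) := by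
  refine mp (of_proves (.of_forall_valuation fun P hP => ?_)) (atRoot_of_proves n h)
  simp only [dia, atRoot, le_refl, if_true, if_neg (lt_add_one n).not_ge, hP.imp, hP.neg, hP.and]
  tauto

end SetProves

theorem box_imp_Q_imp_Q_and (n : Ordinal) (k : ℕ) (φ θ : GLPFormula) :
    GLPProves ((GLPFormula.box n θ).imp ((Q n k φ).imp (Q n k (φ.and θ)))) := by
  induction k with
  | zero =>
    refine .of_forall_valuation fun P hP => ?_
    simp only [Q, hP.imp]
    tauto
  | succ k ih =>
    refine GLPProves.box_imp_dia_imp_dia_of_imp (.mp (.of_forall_valuation fun P hP => ?_) ih)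
    simp only [hP.imp, hP.and]
    tauto

theorem Q_mono (n : Ordinal) (k : ℕ) {φ ψ : GLPFormula} (h : GLPProves (φ.imp ψ)) :
    GLPProves ((Q n k φ).imp (Q n k ψ)) := by
  induction k with
  | zero =>
    refine .of_forall_valuation fun P hP => ?_
    simp only [Q, hP.imp]
    tauto
  | succ k ih =>
    refine GLPProves.dia_mono n (.mp (.mp (.of_forall_valuation fun P hP => ?_) h) ih)
    simp only [hP.imp, hP.and]
    tauto

-- Where `χ → ⟨n⟩χ` fails, `[n]¬χ` holds, so the rest of the chain satisfies `¬χ` and with it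
-- `χ → ⟨n⟩χ`.
theorem Q_succ_imp_Q_and_reflection (n : Ordinal) (k : ℕ) (φ χ : GLPFormula) :
    GLPProves ((Q n (k + 1) φ).imp (Q n k (φ.and (χ.imp (.dia n χ))))) := by
  induction k with
  | zero =>
    refine .of_forall_valuation fun P hP => ?_
    simp only [Q, hP.imp, hP.top, implies_true]
  | succ k ih =>
    have of_and_neg : GLPProves ((Q n (k + 1) (φ.and χ.neg)).imp
        (Q n (k + 1) (φ.and (χ.imp (.dia n χ))))) := by
      refine Q_mono n (k + 1) (.of_forall_valuation fun P hP => ?_)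
      simp only [hP.imp, hP.and, hP.neg]
      tauto
    have and_neg := box_imp_Q_imp_Q_and n (k + 1) φ χ.neg
    refine GLPProves.dia_imp_dia_of_imp_or_dia
      (.mp (.mp (.mp (.of_forall_valuation fun P hP => ?_) ih) and_neg) of_and_neg)
    simp only [hP.imp, hP.and, hP.neg, hP.dia, Q]
    tauto

theorem Q_length_succ_imp_dia_and_listConj {n : Ordinal} (φ : GLPFormula)
    {l : List GLPFormula} (hl : ∀ θ ∈ l, θ ∈ reflectionSchema n) :
    GLPProves ((Q n (l.length + 1) φ).imp (.dia n (φ.and (listConj l)))) := by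
  induction l generalizing φ with
  | nil =>
    refine .of_forall_valuation fun P hP => ?_
    simp [hP.imp, Q, listConj]
  | cons θ l ih =>
    rw [List.forall_mem_cons] at hl
    obtain ⟨⟨χ, rfl⟩, hl⟩ := hl
    refine (Q_succ_imp_Q_and_reflection n (l.length + 1) φ χ).imp_trans ((ih _ hl).imp_trans
      (GLPProves.dia_mono n (.of_forall_valuation fun P hP => ?_)))
    simp only [listConj, hP.imp, hP.and]
    tauto

theorem dia_imp_Q {n ζ : Ordinal} (h : n < ζ) (k : ℕ) (φ : GLPFormula) :
    GLPProves ((GLPFormula.dia ζ φ).imp (Q n k φ)) := by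
  induction k with
  | zero =>
    refine .of_forall_valuation fun P hP => ?_
    simp only [Q, hP.imp, hP.top, implies_true]
  | succ k ih =>
    have dia_imp_box_Q : GLPProves ((GLPFormula.dia ζ φ).imp (.box ζ (Q n k φ))) := by
      cases k with
      | zero =>
        have box_top := (GLPProves.of_forall_valuation fun P hP => hP.top).nec ζ
        refine .mp (.of_forall_valuation fun P hP => ?_) box_top
        simp only [Q, hP.imp]
        tauto
      | succ k => exact ih.imp_trans (GLPProves.box_dia_of_lt h (φ.and (Q n k φ)))
    have dia_imp_dia_and : GLPProves ((GLPFormula.dia ζ φ).imp (.dia ζ (φ.and (Q n k φ)))) := by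
      refine .mp (.mp (.of_forall_valuation fun P hP => ?_) dia_imp_box_Q)
        (GLPProves.box_imp_dia_imp_dia_and ζ (Q n k φ) φ)
      simp only [hP.imp]
      tauto
    exact dia_imp_dia_and.imp_trans (GLPProves.dia_of_lt h _)

theorem setProves_Q_dia_of_reflectionSchema {n : Ordinal} {φ ψ : GLPFormula}
    (h : SetProves Set.univ (reflectionSchema n) (φ.imp (.dia n ψ))) :
    SetProves Set.univ {χ | ∃ k : ℕ, χ = Q n k φ} (.dia n ψ) := by
  obtain ⟨l, hl, hψ⟩ := h
  have dia_dia_ψ : GLPProves ((GLPFormula.dia n (φ.and (listConj l))).imp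
      (.dia n (.dia n ψ))) := by
    refine GLPProves.dia_mono n (.mp (.of_forall_valuation fun P hP => ?_) hψ)
    simp only [hP.imp, hP.and]
    tauto
  exact .mp
    (.of_proves <| (Q_length_succ_imp_dia_and_listConj φ hl).imp_trans <|
      dia_dia_ψ.imp_trans (GLPProves.dia_dia n ψ))
    (.of_mem ⟨l.length + 1, rfl⟩)

theorem algebraic_reduction_property_general (n : Ordinal) (φ ψ : GLPFormula) :
    GLPProves ((GLPFormula.dia (n + 1) φ).imp (GLPFormula.dia n ψ)) ↔
      SetProves Set.univ {χ | ∃ k : ℕ, χ = Q n k φ} (GLPFormula.dia n ψ) := by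
  refine ⟨fun h => setProves_Q_dia_of_reflectionSchema
    (SetProves.imp_dia_of_dia_add_one_imp_dia h), fun h => h.imp_of_forall_imp ?_⟩
  rintro _ ⟨k, rfl⟩
  exact dia_imp_Q (lt_add_one n) k φ

/-- Algebraic reduction property: `⟨n+1⟩φ` is `n`-conservative over `{Q_n^k(φ) : k < ω}`. -/
theorem algebraic_reduction_property (n : ℕ) (φ : GLPFormula) (hφ : IsOmegaFormula φ)
    (ψ : GLPFormula) (hψ : IsOmegaFormula ψ) :
    GLPProves ((GLPFormula.dia ((n : Ordinal) + 1) φ).imp (GLPFormula.dia (n : Ordinal) ψ)) ↔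
      SetProves Set.univ {χ | ∃ k : ℕ, χ = Q (n : Ordinal) k φ}
        (GLPFormula.dia (n : Ordinal) ψ) :=
  algebraic_reduction_property_general n φ ψ
end

section
/- Let A and B be worms and φ any GLP formula. If ⊢_GLP A → B, then ⊢_GLP Q(A,φ) → Q(B,φ). -/
/-! Relativize every formula to `φ` by reading `[ξ]ψ` as `[ξ](φ → ψ)`. Each axiom and rule of GLP
remains derivable under this reading, so theorems relativize to theorems. The dual of the new
modality is `⟨ξ⟩(φ ∧ ψ)`, so the relativization of a worm `A` is equivalent to `Q(A, φ)`. -/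

namespace GLPProof

open GLPFormula

variable {S : Set Ordinal} {ξ ζ : Ordinal} {φ ψ χ : GLPFormula}

theorem mods_subset (h : GLPProof S φ) : φ.mods ⊆ S := by
  induction h with
  | taut hφ _ => exact hφ
  | mp _ _ ih _ => exact (Set.union_subset_iff.mp ih).2
  | nec hξ _ ih => exact Set.insert_subset hξ ih
  | _ => simp only [dia, mods, Set.union_subset_iff, Set.insert_subset_iff, *, and_self]

theorem of_isTautology_imp (h : GLPProof S φ) (hψ : ψ.mods ⊆ S)
    (htaut : IsTautology (φ.imp ψ)) : GLPProof S ψ :=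
  mp (taut (Set.union_subset h.mods_subset hψ) htaut) h

theorem imp_trans (h₁ : GLPProof S (φ.imp ψ)) (h₂ : GLPProof S (ψ.imp χ)) :
    GLPProof S (φ.imp χ) := by
  have hφψ := h₁.mods_subset
  have hψχ := h₂.mods_subset
  have hφχ : (φ.imp χ).mods ⊆ S :=
    Set.union_subset (Set.union_subset_iff.mp hφψ).1 (Set.union_subset_iff.mp hψχ).2
  refine mp (h₁.of_isTautology_imp (Set.union_subset hψχ hφχ) ?_) h₂
  grind [IsTautology]

theorem neg_imp_neg (h : GLPProof S (φ.imp ψ)) : GLPProof S (ψ.neg.imp φ.neg) := by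
  obtain ⟨hφ, hψ⟩ := Set.union_subset_iff.mp h.mods_subset
  exact h.of_isTautology_imp (Set.union_subset hψ hφ) (by grind [IsTautology])

theorem weakening (hφ : φ.mods ⊆ S) (h : GLPProof S ψ) : GLPProof S (φ.imp ψ) :=
  h.of_isTautology_imp (Set.union_subset hφ h.mods_subset) (by grind [IsTautology])

theorem biimp_intro (h₁ : GLPProof S (φ.imp ψ)) (h₂ : GLPProof S (ψ.imp φ)) :
    GLPProof S (φ.biimp ψ) := by
  have hbi := Set.union_subset h₁.mods_subset h₂.mods_subset
  refine mp (h₁.of_isTautology_imp (Set.union_subset h₂.mods_subset hbi) ?_) h₂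
  grind [IsTautology, biimp]

theorem biimp_mp (h : GLPProof S (φ.biimp ψ)) : GLPProof S (φ.imp ψ) :=
  h.of_isTautology_imp (Set.union_subset_iff.mp h.mods_subset).1 (by grind [IsTautology, biimp])

theorem biimp_mpr (h : GLPProof S (φ.biimp ψ)) : GLPProof S (ψ.imp φ) :=
  h.of_isTautology_imp (Set.union_subset_iff.mp h.mods_subset).2 (by grind [IsTautology, biimp])

theorem neg_neg_biimp (hφ : φ.mods ⊆ S) : GLPProof S (φ.neg.neg.biimp φ) :=
  have hφφ := Set.union_subset hφ hφ
  biimp_intro (taut hφφ (by grind [IsTautology])) (taut hφφ (by grind [IsTautology]))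

theorem box_imp_box (hξ : ξ ∈ S) (h : GLPProof S (φ.imp ψ)) :
    GLPProof S ((box ξ φ).imp (box ξ ψ)) :=
  have ⟨hφ, hψ⟩ := Set.union_subset_iff.mp h.mods_subset
  mp (distr hξ hφ hψ) (nec hξ h)

theorem dia_biimp_neg_box_of_neg_biimp (hξ : ξ ∈ S) (h : GLPProof S (φ.neg.biimp ψ)) :
    GLPProof S ((dia ξ φ).biimp (box ξ ψ).neg) :=
  biimp_intro (box_imp_box hξ h.biimp_mpr).neg_imp_neg (box_imp_box hξ h.biimp_mp).neg_imp_neg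

theorem dia_neg_biimp_neg_box (hξ : ξ ∈ S) (hφ : φ.mods ⊆ S) :
    GLPProof S ((dia ξ φ.neg).biimp (box ξ φ).neg) :=
  dia_biimp_neg_box_of_neg_biimp hξ (neg_neg_biimp hφ)

theorem neg_box_imp_neg_box_of_lt (hlt : ξ < ζ) (hξ : ξ ∈ S) (hζ : ζ ∈ S) (hφ : φ.mods ⊆ S) :
    GLPProof S ((box ζ φ).neg.imp (box ξ φ).neg) :=
  ((dia_neg_biimp_neg_box hζ hφ).biimp_mpr.imp_trans (negIntro hlt hξ hζ hφ)).imp_trans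
    (dia_neg_biimp_neg_box hξ hφ).biimp_mp

theorem neg_box_imp_box_neg_box_of_lt (hlt : ξ < ζ) (hξ : ξ ∈ S) (hζ : ζ ∈ S)
    (hφ : φ.mods ⊆ S) :
    GLPProof S ((box ξ φ).neg.imp (box ζ (box ξ φ).neg)) :=
  have hdual := dia_neg_biimp_neg_box hξ hφ
  (hdual.biimp_mpr.imp_trans (mono hlt hξ hζ hφ)).imp_trans (box_imp_box hζ hdual.biimp_mp)

theorem box_imp_box_weakening (hξ : ξ ∈ S) (hφ : φ.mods ⊆ S) (hψ : ψ.mods ⊆ S) :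
    GLPProof S ((box ξ ψ).imp (box ξ (φ.imp ψ))) :=
  box_imp_box hξ <|
    taut (Set.union_subset hψ (Set.union_subset hφ hψ)) (by grind [IsTautology])

end GLPProof

namespace GLPFormula

/-- The relativization of a formula to `φ`, obtained by replacing every modality `[ξ]ψ` by
`[ξ](φ → ψ)`. It turns derivability of implications between worms into derivability of
implications between generalized `Q`-formulas. -/
def relativize (φ : GLPFormula) : GLPFormula → GLPFormula
  | var n => var n
  | top => top
  | neg ψ => neg (relativize φ ψ)
  | and ψ χ => and (relativize φ ψ) (relativize φ χ)
  | imp ψ χ => imp (relativize φ ψ) (relativize φ χ)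
  | box ξ ψ => box ξ (φ.imp (relativize φ ψ))

variable {S : Set Ordinal} {φ ψ : GLPFormula}

theorem mods_relativize_subset (hφ : φ.mods ⊆ S) (hψ : ψ.mods ⊆ S) :
    (relativize φ ψ).mods ⊆ S := by
  induction ψ with
  | var | top => exact hψ
  | neg _ ih => exact ih hψ
  | and _ _ ih₁ ih₂ | imp _ _ ih₁ ih₂ =>
    have ⟨h₁, h₂⟩ := Set.union_subset_iff.mp hψ
    exact Set.union_subset (ih₁ h₁) (ih₂ h₂)
  | box _ _ ih =>
    have ⟨hξ, h⟩ := Set.insert_subset_iff.mp hψ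
    exact Set.insert_subset hξ (Set.union_subset hφ (ih h))

end GLPFormula

theorem IsTautology.relativize {ψ : GLPFormula} (φ : GLPFormula) (h : IsTautology ψ) :
    IsTautology (φ.relativize ψ) :=
  fun v htop hneg hand himp =>
    h (fun χ => v (φ.relativize χ)) htop (fun _ => hneg _) (fun _ _ => hand _ _)
      (fun _ _ => himp _ _)

namespace GLPProof

open GLPFormula

variable {S : Set Ordinal} {ξ ζ : Ordinal} {φ ψ χ : GLPFormula}

theorem distr_relative (hξ : ξ ∈ S) (hφ : φ.mods ⊆ S) (hψ : ψ.mods ⊆ S) (hχ : χ.mods ⊆ S) :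
    GLPProof S ((box ξ (φ.imp (ψ.imp χ))).imp
      ((box ξ (φ.imp ψ)).imp (box ξ (φ.imp χ)))) := by
  have hφψ : (φ.imp ψ).mods ⊆ S := Set.union_subset hφ hψ
  have hφχ : (φ.imp χ).mods ⊆ S := Set.union_subset hφ hχ
  have distribute : GLPProof S ((φ.imp (ψ.imp χ)).imp ((φ.imp ψ).imp (φ.imp χ))) := by
    refine taut (Set.union_subset ?_ (Set.union_subset hφψ hφχ)) (by grind [IsTautology])
    exact Set.union_subset hφ (Set.union_subset hψ hχ)
  exact (box_imp_box hξ distribute).imp_trans (distr hξ hφψ hφχ)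

theorem trans_relative (hξ : ξ ∈ S) (hφ : φ.mods ⊆ S) (hψ : ψ.mods ⊆ S) :
    GLPProof S ((box ξ (φ.imp ψ)).imp (box ξ (φ.imp (box ξ (φ.imp ψ))))) := by
  have hφψ : (φ.imp ψ).mods ⊆ S := Set.union_subset hφ hψ
  exact (trans hξ hφψ).imp_trans (box_imp_box_weakening hξ hφ (Set.insert_subset hξ hφψ))

theorem lob_relative (hξ : ξ ∈ S) (hφ : φ.mods ⊆ S) (hψ : ψ.mods ⊆ S) :
    GLPProof S ((box ξ (φ.imp ((box ξ (φ.imp ψ)).imp ψ))).imp (box ξ (φ.imp ψ))) := by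
  have hφψ : (φ.imp ψ).mods ⊆ S := Set.union_subset hφ hψ
  have hbox : (box ξ (φ.imp ψ)).mods ⊆ S := Set.insert_subset hξ hφψ
  have swap : GLPProof S
      ((φ.imp ((box ξ (φ.imp ψ)).imp ψ)).imp ((box ξ (φ.imp ψ)).imp (φ.imp ψ))) := by
    refine taut (Set.union_subset ?_ (Set.union_subset hbox hφψ)) (by grind [IsTautology])
    exact Set.union_subset hφ (Set.union_subset hbox hψ)
  exact (box_imp_box hξ swap).imp_trans (lob hξ hφψ)

theorem mono_relative (hlt : ξ < ζ) (hξ : ξ ∈ S) (hζ : ζ ∈ S) (hφ : φ.mods ⊆ S)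
    (hψ : ψ.mods ⊆ S) :
    GLPProof S ((box ξ (φ.imp ψ)).neg.imp (box ζ (φ.imp (box ξ (φ.imp ψ)).neg))) := by
  have hφψ : (φ.imp ψ).mods ⊆ S := Set.union_subset hφ hψ
  have hbox : (box ξ (φ.imp ψ)).neg.mods ⊆ S := Set.insert_subset hξ hφψ
  exact (neg_box_imp_box_neg_box_of_lt hlt hξ hζ hφψ).imp_trans
    (box_imp_box_weakening hζ hφ hbox)

theorem relativize (hφ : φ.mods ⊆ S) (h : GLPProof S ψ) :
    GLPProof S (φ.relativize ψ) := by
  have hrel {χ : GLPFormula} (hχ : χ.mods ⊆ S) : (φ.relativize χ).mods ⊆ S :=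
    mods_relativize_subset hφ hχ
  induction h with
  | taut hψ htaut => exact taut (hrel hψ) (htaut.relativize φ)
  | distr hξ hψ hχ => exact distr_relative hξ hφ (hrel hψ) (hrel hχ)
  | trans hξ hψ => exact trans_relative hξ hφ (hrel hψ)
  | lob hξ hψ => exact lob_relative hξ hφ (hrel hψ)
  | negIntro hlt hξ hζ hψ =>
    exact neg_box_imp_neg_box_of_lt hlt hξ hζ (Set.union_subset hφ (hrel hψ))
  | mono hlt hξ hζ hψ =>
    exact mono_relative (ψ := (φ.relativize _).neg) hlt hξ hζ hφ (hrel hψ)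
  | mp _ _ ihimp ih => exact mp ihimp ih
  | nec hξ _ ih => exact nec hξ (weakening hφ ih)

theorem neg_and_biimp_imp_neg_of_biimp (hφ : φ.mods ⊆ S) (h : GLPProof S (ψ.biimp χ)) :
    GLPProof S ((φ.and ψ).neg.biimp (φ.imp χ.neg)) := by
  obtain ⟨hψ, hχ⟩ := Set.union_subset_iff.mp h.biimp_mp.mods_subset
  refine h.of_isTautology_imp ?_ fun v _ hneg hand himp => ?_
  · simp only [biimp, mods, Set.union_subset_iff, hφ, hψ, hχ, and_self]
  · simp only [biimp, hneg, hand, himp]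
    cases v φ <;> cases v ψ <;> cases v χ <;> rfl

theorem QWorm_biimp_relativize_wormFormula (hφ : φ.mods ⊆ S) {A : List Ordinal}
    (hA : (wormFormula A).mods ⊆ S) :
    GLPProof S ((QWorm A φ).biimp (φ.relativize (wormFormula A))) := by
  induction A with
  | nil =>
    have htop : GLPProof S (top.imp top) :=
      taut (Set.union_subset hA hA) (by grind [IsTautology])
    exact biimp_intro htop htop
  | cons γ A ih =>
    obtain ⟨hγ, hA⟩ := Set.insert_subset_iff.mp hA
    exact dia_biimp_neg_box_of_neg_biimp hγ (neg_and_biimp_imp_neg_of_biimp hφ (ih hA))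

end GLPProof

theorem QWorm_monotone_general {S : Set Ordinal} {A B : List Ordinal} {φ : GLPFormula}
    (hφ : φ.mods ⊆ S) (h : GLPProof S ((wormFormula A).imp (wormFormula B))) :
    GLPProof S ((QWorm A φ).imp (QWorm B φ)) := by
  obtain ⟨hA, hB⟩ := Set.union_subset_iff.mp h.mods_subset
  have hAB : GLPProof S ((φ.relativize (wormFormula A)).imp (φ.relativize (wormFormula B))) :=
    h.relativize hφ
  have hQA := GLPProof.QWorm_biimp_relativize_wormFormula hφ hA
  have hQB := GLPProof.QWorm_biimp_relativize_wormFormula hφ hB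
  exact (hQA.biimp_mp.imp_trans hAB).imp_trans hQB.biimp_mpr

/-- If `⊢_GLP A → B` for worms `A`, `B`, then `⊢_GLP Q(A,φ) → Q(B,φ)`. -/
theorem QWorm_monotone (A B : List Ordinal) (φ : GLPFormula)
    (h : GLPProves ((wormFormula A).imp (wormFormula B))) :
    GLPProves ((QWorm A φ).imp (QWorm B φ)) :=
  QWorm_monotone_general (Set.subset_univ _) h
end
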